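/- (Well-definedness of Algorithm 1.) Consider the sequences generated by Algorithm 1. Then for every k ≥ 0 the solution set S := {x : 0 ∈ T(x)} is contained in H_k ∩ W_k; in particular H_k ∩ W_k is a nonempty closed convex set, so the projection of x₀ onto H_k ∩ W_k defining x_{k+1} exists, and Algorithm 1 generates infinite sequences. -/

import Mathlib

open scoped RealInnerProductSpace
open Filter Topology

variable {H : Type*} [NormedAddCommGroup H] [InnerProductSpace ℝ H] [CompleteSpace H]

/-- A set-valued operator is monotone. -/
def IsMonotoneOp (T : H → Set H) : Prop :=
  ∀ x y u v, u ∈ T x → v ∈ T y → 0 ≤ ⟪u - v, x - y⟫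

/-- A set-valued operator is maximal monotone. -/
def IsMaxMonotoneOp (T : H → Set H) : Prop :=
  IsMonotoneOp T ∧ ∀ x v, (∀ y u, u ∈ T y → 0 ≤ ⟪u - v, y - x⟫) → v ∈ T x

/-- The ε-enlargement of a set-valued operator. -/
def enl (T : H → Set H) (ε : ℝ) (y : H) : Set H :=
  {v | ∀ z u, u ∈ T z → ⟪u - v, z - y⟫ ≥ -ε}

/-!
Testing `v ∈ T^ε(y)` against `0 ∈ T z` puts every zero `z` of `T` in the half-space cut out by the
pair `(y, v)`, so `S ⊆ H_k`. That `S ⊆ W_k` follows by induction on `k`: once `S` lies in the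
convex set `H_k ∩ W_k`, the variational characterization of the projection `x_{k+1}` of `x₀` onto
this set puts `S` in `W_{k+1}`. The argument for `H_k ∩ W_k` involves the iterates up to `x_k`
alone, so the nonemptiness of `S` and the projection theorem continue any finite run.
-/

theorem isMinOn_norm_sub_iff_eq_iInf {E : Type*} [SeminormedAddCommGroup E] {C : Set E} {u p : E}
    (hp : p ∈ C) : IsMinOn (fun z => ‖z - u‖) C p ↔ ‖u - p‖ = ⨅ z : C, ‖u - z‖ := by
  simp only [norm_sub_rev u]
  refine ⟨fun hmin => (hmin.iInf_eq hp).symm, fun hp_eq z hz => ?_⟩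
  have bdd : BddBelow (Set.range fun z : C => ‖(z : E) - u‖) :=
    ⟨0, Set.forall_mem_range.2 fun _ => norm_nonneg _⟩
  exact hp_eq.trans_le (ciInf_le bdd ⟨z, hz⟩)

section InnerProductSpace

variable {E : Type*} [NormedAddCommGroup E] [InnerProductSpace ℝ E]

/-- The half-space `{z | ⟪z - a, n⟫ ≤ c}` with outer normal `n`, its offset `c` measured from the
base point `a`. In Algorithm 1, `H_k` is `halfSpace (y k) (v k) (ε k)` and `W_k` is
`halfSpace (x k) (x 0 - x k) 0`. -/
def halfSpace (a n : E) (c : ℝ) : Set E := {z | ⟪z - a, n⟫ ≤ c}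

theorem isClosed_halfSpace (a n : E) (c : ℝ) : IsClosed (halfSpace a n c) :=
  isClosed_le (by fun_prop) continuous_const

theorem convex_halfSpace (a n : E) (c : ℝ) : Convex ℝ (halfSpace a n c) := by
  have halfSpace_eq : halfSpace a n c = {z | innerₛₗ ℝ n z ≤ c + ⟪n, a⟫} := by
    ext z
    simp only [halfSpace, Set.mem_ofPred_eq, real_inner_comm, inner_sub_right, innerₛₗ_apply_apply,
      sub_le_iff_le_add]
  rw [halfSpace_eq]
  exact convex_halfSpace_le (innerₛₗ ℝ n).isLinear _

theorem zeros_subset_halfSpace_of_mem_enl {T : E → Set E} {ε : ℝ} {y v : E} (hv : v ∈ enl T ε y) :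
    {z : E | (0 : E) ∈ T z} ⊆ halfSpace y v ε := by
  intro z hz
  have h : -ε ≤ -⟪z - y, v⟫ := by
    simpa only [zero_sub, inner_neg_left, real_inner_comm] using hv z 0 hz
  exact neg_le_neg_iff.1 h

theorem exists_isMinOn_norm_sub {C : Set E} (hne : C.Nonempty) (hcomplete : IsComplete C)
    (hconvex : Convex ℝ C) (u : E) : ∃ p ∈ C, IsMinOn (fun z => ‖z - u‖) C p := by
  obtain ⟨p, hp, hp_eq⟩ := exists_norm_eq_iInf_of_complete_convex hne hcomplete hconvex u
  exact ⟨p, hp, (isMinOn_norm_sub_iff_eq_iInf hp).2 hp_eq⟩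

theorem subset_halfSpace_of_isMinOn_norm_sub {C : Set E} (hconvex : Convex ℝ C) {u p : E}
    (hp : p ∈ C) (hmin : IsMinOn (fun z => ‖z - u‖) C p) : C ⊆ halfSpace p (u - p) 0 := by
  intro z hz
  have h := (norm_eq_iInf_iff_real_inner_le_zero hconvex hp).1
    ((isMinOn_norm_sub_iff_eq_iInf hp).1 hmin) z hz
  rwa [real_inner_comm] at h

theorem subset_halfSpace_of_iterated_projection {S : Set E} {C : ℕ → Set E} {x : ℕ → E} {k : ℕ}
    (hconvex : ∀ j < k, Convex ℝ (C j)) (hS : ∀ j < k, S ⊆ C j)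
    (hmem : ∀ j < k, x (j + 1) ∈ C j ∩ halfSpace (x j) (x 0 - x j) 0)
    (hmin : ∀ j < k,
      IsMinOn (fun z => ‖z - x 0‖) (C j ∩ halfSpace (x j) (x 0 - x j) 0) (x (j + 1))) :
    S ⊆ halfSpace (x k) (x 0 - x k) 0 := by
  induction k with
  | zero => intro z _; simp [halfSpace]
  | succ k ih =>
    have hk : k < k + 1 := k.lt_succ_self
    have hS_k : S ⊆ halfSpace (x k) (x 0 - x k) 0 :=
      ih (fun j hj => hconvex j (hj.trans hk)) (fun j hj => hS j (hj.trans hk))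
        (fun j hj => hmem j (hj.trans hk)) fun j hj => hmin j (hj.trans hk)
    exact (Set.subset_inter (hS k hk) hS_k).trans <|
      subset_halfSpace_of_isMinOn_norm_sub ((hconvex k hk).inter (convex_halfSpace _ _ _))
        (hmem k hk) (hmin k hk)

/-- The set `H_k ∩ W_k` of Algorithm 1, onto which `x 0` is projected to obtain `x (k + 1)`. -/
def projectionSet (ε : ℕ → ℝ) (x y v : ℕ → E) (k : ℕ) : Set E :=
  halfSpace (y k) (v k) (ε k) ∩ halfSpace (x k) (x 0 - x k) 0

end InnerProductSpace

theorem stmt19_general (T : H → Set H) (hS : {z : H | (0 : H) ∈ T z}.Nonempty)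
    (ε : ℕ → ℝ) (x y v : ℕ → H) (k : ℕ)
    (hincl : ∀ j ≤ k, v j ∈ enl T (ε j) (y j))
    (hmem : ∀ j < k, x (j + 1) ∈ projectionSet ε x y v j)
    (hmin : ∀ j < k, IsMinOn (fun z => ‖z - x 0‖) (projectionSet ε x y v j) (x (j + 1))) :
    {z : H | (0 : H) ∈ T z} ⊆ projectionSet ε x y v k ∧
      (projectionSet ε x y v k).Nonempty ∧
      IsClosed (projectionSet ε x y v k) ∧
      Convex ℝ (projectionSet ε x y v k) ∧
      ∃ p ∈ projectionSet ε x y v k, IsMinOn (fun z => ‖z - x 0‖) (projectionSet ε x y v k) p := by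
  have hsub : {z : H | (0 : H) ∈ T z} ⊆ projectionSet ε x y v k :=
    Set.subset_inter (zeros_subset_halfSpace_of_mem_enl (hincl k le_rfl)) <|
      subset_halfSpace_of_iterated_projection (fun _ _ => convex_halfSpace _ _ _)
        (fun j hj => zeros_subset_halfSpace_of_mem_enl (hincl j hj.le)) hmem hmin
  have hne : (projectionSet ε x y v k).Nonempty := hS.mono hsub
  have hclosed : IsClosed (projectionSet ε x y v k) :=
    (isClosed_halfSpace _ _ _).inter (isClosed_halfSpace _ _ _)
  have hconvex : Convex ℝ (projectionSet ε x y v k) :=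
    (convex_halfSpace _ _ _).inter (convex_halfSpace _ _ _)
  exact ⟨hsub, hne, hclosed, hconvex,
    exists_isMinOn_norm_sub hne hclosed.isComplete hconvex (x 0)⟩

/-- Appendix A (well-definedness of Algorithm 1): S ⊆ H_k ∩ W_k, which is nonempty closed convex, and the projection of x₀ onto it exists. -/
theorem stmt19
    (T : H → Set H) (hT : IsMaxMonotoneOp T)
    (hS : {z : H | (0 : H) ∈ T z}.Nonempty)
    (σ : ℝ) (hσ0 : 0 ≤ σ) (hσ1 : σ < 1)
    (α β lam ε : ℕ → ℝ)
    (hα : ∀ k, 0 ≤ α k) (hβ : ∀ k, 0 ≤ β k)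
    (hlam : ∀ k, 0 < lam k) (hε : ∀ k, 0 ≤ ε k)
    (x w wt y v : ℕ → H)
    (hw : ∀ k, w k = x k + α k • (x k - x (k - 1)))
    (hwt : ∀ k, wt k = w k + β k • (w k - x 0))
    (hincl : ∀ k, v k ∈ enl T (ε k) (y k))
    (herr : ∀ k, ‖lam k • v k + y k - wt k‖ ^ 2 + 2 * lam k * ε k ≤
      σ ^ 2 * (‖lam k • v k‖ ^ 2 + ‖y k - wt k‖ ^ 2))
    (hmem : ∀ k, ⟪x (k + 1) - y k, v k⟫ ≤ ε k ∧ ⟪x (k + 1) - x k, x 0 - x k⟫ ≤ 0)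
    (hproj : ∀ k, ∀ z : H, ⟪z - y k, v k⟫ ≤ ε k → ⟪z - x k, x 0 - x k⟫ ≤ 0 →
      ‖x (k + 1) - x 0‖ ≤ ‖z - x 0‖) :
    ∀ k : ℕ,
      {z : H | (0 : H) ∈ T z} ⊆
        ({z : H | ⟪z - y k, v k⟫ ≤ ε k} ∩ {z : H | ⟪z - x k, x 0 - x k⟫ ≤ 0}) ∧
      ({z : H | ⟪z - y k, v k⟫ ≤ ε k} ∩ {z : H | ⟪z - x k, x 0 - x k⟫ ≤ 0}).Nonempty ∧
      IsClosed ({z : H | ⟪z - y k, v k⟫ ≤ ε k} ∩ {z : H | ⟪z - x k, x 0 - x k⟫ ≤ 0}) ∧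
      Convex ℝ ({z : H | ⟪z - y k, v k⟫ ≤ ε k} ∩ {z : H | ⟪z - x k, x 0 - x k⟫ ≤ 0}) ∧
      ∃ p ∈ ({z : H | ⟪z - y k, v k⟫ ≤ ε k} ∩ {z : H | ⟪z - x k, x 0 - x k⟫ ≤ 0}),
        ∀ z ∈ ({z : H | ⟪z - y k, v k⟫ ≤ ε k} ∩ {z : H | ⟪z - x k, x 0 - x k⟫ ≤ 0}),
          ‖p - x 0‖ ≤ ‖z - x 0‖ := fun k =>
  stmt19_general T hS ε x y v k (fun j _ => hincl j) (fun j _ => hmem j)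
    fun j _ z hz => hproj j z hz.1 hz.2
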